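/- For every ε ∈ (0, 4π), the finite supremum S_ε = sup{ ∫_B e^{(4π−ε) u²} dx : u ∈ Σ, H(u) ≤ 1 } is attained in the completion of Σ under the Hardy norm in the following sense: there exist a measurable function u_ε : B → ℝ and a sequence (u_k) in Σ with H(u_k) ≤ 1 for all k, lim_{k→∞} H(u_k) = 1, H(u_j − u_k) → 0 as j, k → ∞, and u_k → u_ε almost everywhere in B, such that ∫_B e^{(4π−ε) u_ε(x)²} dx = S_ε. -/

import Mathlib

/-!
The ground state substitution `u = √(1 - |x|²) V` turns the Hardy functional into
`H(u) = ∫ ((1 - |x|²) |∇V|² + V²)`, the remaining terms forming the divergence `div (V² x)`.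
Hence `H` is a nonnegative quadratic form on `C_c^∞(B)`, and for radial `u` with `H(u) ≤ 1` the
Cauchy–Schwarz inequality gives `|V(b) - V(a)|² ≤ (h(b) - h(a)) / 2π` with `h' = 1 / (r (1 - r²))`.

For `u ∈ Σ` with `H(u) ≤ 1` it follows that `u(x) ≤ 2 + √(log (1/|x|) / 2π)`. Since
`α = 4π - ε < 4π`, all the functions `exp (α u²)` are dominated by one integrable function
`C |x|^(-β)` with `β < 2`. The bound on `V(b) - V(a)` is also an equicontinuity estimate, so a
maximizing sequence has a subsequence converging almost everywhere to some `w`, which attains the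
supremum by dominated convergence.

To approximate `w` in the Hardy norm, take almost minimizers of `H` over the convex hulls of the
tails of that subsequence: they lie in `Σ`, still converge to `w`, and are Cauchy by the
parallelogram identity. If their energies tended to a limit below `1`, some multiple `c w` with
`c > 1` would still be a limit of competitors; by maximality of `w` this forces `w = 0` almost
everywhere, whereas any nonzero element of `Σ` does better than the zero function.
-/

open MeasureTheory Real Filter

noncomputable section

/-- `ℝ²` as a Euclidean space. -/
abbrev E2 : Type := EuclideanSpace ℝ (Fin 2)

/-- The open unit disc in `ℝ²`. -/
def B2 : Set E2 := Metric.ball 0 1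

/-- `u ∈ C_c^∞(B)`: a smooth function with compact support contained in the open unit disc. -/
def IsTest (u : E2 → ℝ) : Prop :=
  ContDiff ℝ (⊤ : ℕ∞) u ∧ HasCompactSupport u ∧ tsupport u ⊆ B2

/-- `u ∈ Σ`: a smooth compactly supported function on the unit disc which is radially
symmetric and nonincreasing in the radius (encoded as: `‖x‖ ≤ ‖y‖ → u y ≤ u x`, which is
equivalent to radial symmetry together with monotonicity in `r`). -/
def IsSigma (u : E2 → ℝ) : Prop :=
  IsTest u ∧ ∀ x y : E2, ‖x‖ ≤ ‖y‖ → u y ≤ u x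

/-- The localized Hardy functional `H_Ω(u) = ∫_Ω |∇u|² − ∫_Ω u²/(1−|x|²)²`. -/
def HOn (Ω : Set E2) (u : E2 → ℝ) : ℝ :=
  (∫ x in Ω, ‖gradient u x‖ ^ 2) - ∫ x in Ω, (u x) ^ 2 / (1 - ‖x‖ ^ 2) ^ 2

/-- The Hardy functional `H(u) = H_B(u)`. -/
def H (u : E2 → ℝ) : ℝ := HOn B2 u

/-- The point `(r, 0) ∈ ℝ²`, used to evaluate a radial function at radius `r`. -/
def pt (r : ℝ) : E2 := EuclideanSpace.single 0 r

open Set Topology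
open scoped Distributions InnerProductSpace

section IntegrationByParts

variable {E F : Type*} [NormedAddCommGroup E] [NormedSpace ℝ E] [FiniteDimensional ℝ E]
  [MeasurableSpace E] [BorelSpace E] [NormedAddCommGroup F] [NormedSpace ℝ F]
  {μ : Measure E} [μ.IsAddHaarMeasure]

theorem integral_clm_smul_fderiv_eq_neg {f : E → F} (hf : ContDiff ℝ 1 f)
    (hfc : HasCompactSupport f) (ℓ : E →L[ℝ] ℝ) (v : E) :
    ∫ x, ℓ x • fderiv ℝ f x v ∂μ = -(ℓ v • ∫ x, f x ∂μ) := by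
  have hcont : Continuous fun x => fderiv ℝ f x v :=
    (hf.continuous_fderiv one_ne_zero).clm_apply continuous_const
  rw [integral_smul_fderiv_eq_neg_fderiv_smul_of_integrable]
  · simp only [ContinuousLinearMap.fderiv, integral_smul]
  · simpa only [ContinuousLinearMap.fderiv] using
      (hf.continuous.integrable_of_hasCompactSupport hfc).fun_smul (ℓ v)
  · exact (ℓ.continuous.smul hcont).integrable_of_hasCompactSupport
      (hfc.fderiv_apply ℝ v).smul_left
  · exact (ℓ.continuous.smul hf.continuous).integrable_of_hasCompactSupport hfc.smul_left
  · exact fun _ _ => ℓ.differentiableAt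
  · exact fun x _ => (hf.differentiable one_ne_zero) x

theorem integral_fderiv_apply_self {f : E → F} (hf : ContDiff ℝ 1 f)
    (hfc : HasCompactSupport f) :
    ∫ x, fderiv ℝ f x x ∂μ = -((Module.finrank ℝ E : ℝ) • ∫ x, f x ∂μ) := by
  let b := Module.finBasis ℝ E
  let coord (i : Fin (Module.finrank ℝ E)) : E →L[ℝ] ℝ := (b.coord i).toContinuousLinearMap
  have expand (x : E) : fderiv ℝ f x x = ∑ i, coord i x • fderiv ℝ f x (b i) := by
    conv_lhs => rw [← b.sum_repr x, map_sum]
    simp only [b.sum_repr, map_smul]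
    rfl
  have coord_self (i) : coord i (b i) = 1 := by simp [coord]
  have hint (i) : Integrable (fun x => coord i x • fderiv ℝ f x (b i)) μ :=
    ((coord i).continuous.smul ((hf.continuous_fderiv one_ne_zero).clm_apply
      continuous_const)).integrable_of_hasCompactSupport (hfc.fderiv_apply ℝ (b i)).smul_left
  simp_rw [expand]
  rw [integral_finsetSum _ fun i _ => hint i]
  simp only [integral_clm_smul_fderiv_eq_neg hf hfc, coord_self, one_smul, Finset.sum_neg_distrib,
    Finset.sum_const, Finset.card_univ, Fintype.card_fin, Nat.cast_smul_eq_nsmul]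

end IntegrationByParts

theorem contDiff_of_contDiffAt_tsupport {𝕜 E F : Type*} [NontriviallyNormedField 𝕜]
    [NormedAddCommGroup E] [NormedSpace 𝕜 E] [NormedAddCommGroup F] [NormedSpace 𝕜 F]
    {n : WithTop ℕ∞} {f : E → F} (hf : ∀ x ∈ tsupport f, ContDiffAt 𝕜 n f x) :
    ContDiff 𝕜 n f :=
  contMDiff_iff_contDiff.1 <| contMDiff_of_tsupport fun x hx => (hf x hx).contMDiffAt

theorem norm_gradient_comp_norm {E : Type*} [NormedAddCommGroup E] [InnerProductSpace ℝ E]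
    [CompleteSpace E] [Nontrivial E] {g : ℝ → ℝ} {x : E} (hx : x ≠ 0)
    (hg : DifferentiableAt ℝ g ‖x‖) :
    ‖gradient (fun y => g ‖y‖) x‖ = |deriv g ‖x‖| := by
  have hnorm : DifferentiableAt ℝ (fun y : E => ‖y‖) x :=
    (contDiffAt_norm ℝ hx (n := 1)).differentiableAt one_ne_zero
  have hcomp : HasFDerivAt (fun y : E => g ‖y‖) (deriv g ‖x‖ • fderiv ℝ (fun y : E => ‖y‖) x) x :=
    hg.hasDerivAt.comp_hasFDerivAt x hnorm.hasFDerivAt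
  rw [gradient, LinearIsometryEquiv.norm_map, hcomp.fderiv, norm_smul, norm_fderiv_norm hnorm,
    mul_one, Real.norm_eq_abs]

theorem sq_sub_le_mul_integral_sq_deriv_div {f f' h h' : ℝ → ℝ} {a b : ℝ} (hab : a ≤ b)
    (hf : ∀ x ∈ Icc a b, HasDerivAt f (f' x) x) (hf' : ContinuousOn f' (Icc a b))
    (hh : ∀ x ∈ Icc a b, HasDerivAt h (h' x) x) (hh' : ContinuousOn h' (Icc a b))
    (hpos : ∀ x ∈ Icc a b, 0 < h' x) :
    (f b - f a) ^ 2 ≤ (h b - h a) * ∫ x in a..b, f' x ^ 2 / h' x := by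
  rw [← uIcc_of_le hab] at hf hf' hh hh' hpos
  have hne : ∀ x ∈ uIcc a b, h' x ≠ 0 := fun x hx => (hpos x hx).ne'
  have hint_f : IntervalIntegrable f' volume a b := hf'.intervalIntegrable
  have hint_h : IntervalIntegrable h' volume a b := hh'.intervalIntegrable
  have hint_q : IntervalIntegrable (fun x => f' x ^ 2 / h' x) volume a b :=
    ((hf'.pow 2).div hh' hne).intervalIntegrable
  have hquad (c : ℝ) :
      0 ≤ (h b - h a) * (c * c) + -(2 * (f b - f a)) * c + ∫ x in a..b, f' x ^ 2 / h' x := by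
    calc 0 ≤ ∫ x in a..b, (f' x - c * h' x) ^ 2 / h' x :=
          intervalIntegral.integral_nonneg hab fun x hx =>
            div_nonneg (sq_nonneg _) (hpos x (uIcc_of_le hab ▸ hx)).le
      _ = ∫ x in a..b, (c * c * h' x + -(2 * c) * f' x + f' x ^ 2 / h' x) :=
          intervalIntegral.integral_congr fun x hx => by field [hne x hx]
      _ = _ := by
          rw [intervalIntegral.integral_add ((hint_h.const_mul _).add (hint_f.const_mul _)) hint_q,
            intervalIntegral.integral_add (hint_h.const_mul _) (hint_f.const_mul _),
            intervalIntegral.integral_const_mul, intervalIntegral.integral_const_mul,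
            intervalIntegral.integral_eq_sub_of_hasDerivAt hh hint_h,
            intervalIntegral.integral_eq_sub_of_hasDerivAt hf hint_f]
          ring
  have hdiscrim := discrim_le_zero hquad
  rw [discrim] at hdiscrim
  linarith

theorem mul_add_sq_le_of_lt {α β : ℝ} (h : α < β) (a q : ℝ) :
    α * (a + q) ^ 2 ≤ β * q ^ 2 + α * β * a ^ 2 / (β - α) := by
  have hpos : 0 < β - α := sub_pos.2 h
  have hsq : β * q ^ 2 + α * β * a ^ 2 / (β - α) - α * (a + q) ^ 2 =
      ((β - α) * q - α * a) ^ 2 / (β - α) := by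
    field
  exact sub_nonneg.1 (hsq ▸ by positivity)

theorem exists_subseq_tendsto_of_equicontinuous {X α : Type*} [TopologicalSpace X]
    [TopologicalSpace.SeparableSpace X] [PseudoMetricSpace α] [ProperSpace α] {F : ℕ → X → α}
    (hF : Equicontinuous F) (hbdd : ∀ x, Bornology.IsBounded (range fun n => F n x)) :
    ∃ φ : ℕ → ℕ, StrictMono φ ∧ ∃ f : X → α, ∀ x, Tendsto (fun n => F (φ n) x) atTop (𝓝 (f x)) := by
  obtain ⟨D, hD_countable, hD_dense⟩ := TopologicalSpace.exists_countable_dense X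
  have := hD_countable.to_subtype
  have hK : IsCompact (univ.pi fun d : D => closure (range fun n => F n d)) :=
    isCompact_univ_pi fun d => (hbdd d).isCompact_closure
  obtain ⟨g, -, φ, hφ, hg⟩ := hK.tendsto_subseq (x := fun n (d : D) => F n d) fun n d _ =>
    subset_closure (mem_range_self n)
  have hcauchy (x : X) : CauchySeq fun n => F (φ n) x := by
    refine Metric.cauchySeq_iff.2 fun δ hδ => ?_
    obtain ⟨U, hU, hFU⟩ := Metric.equicontinuousAt_iff_pair.1 (hF x) (δ / 3) (by positivity)
    obtain ⟨d, hdU, hdD⟩ := mem_closure_iff_nhds.1 (hD_dense x) U hU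
    obtain ⟨N, hN⟩ := Metric.cauchySeq_iff.1 (tendsto_pi_nhds.1 hg ⟨d, hdD⟩).cauchySeq
      (δ / 3) (by positivity)
    refine ⟨N, fun m hm n hn => ?_⟩
    have hxU := mem_of_mem_nhds hU
    have hmd := hFU x hxU d hdU (φ m)
    have hdn := hFU d hdU x hxU (φ n)
    have hmn := hN m hm n hn
    simp only [Function.comp_apply] at hmn
    linarith [dist_triangle4 (F (φ m) x) (F (φ m) d) (F (φ n) d) (F (φ n) x)]
  choose f hf using fun x => cauchySeq_tendsto_of_complete (hcauchy x)
  exact ⟨φ, hφ, f, hf⟩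

theorem tendsto_of_mem_convexHull_image_Ici {E : Type*} [AddCommGroup E] [Module ℝ E]
    [TopologicalSpace E] [LocallyConvexSpace ℝ E] {a b : ℕ → E} {l : E}
    (ha : Tendsto a atTop (𝓝 l)) (hb : ∀ n, b n ∈ convexHull ℝ (a '' Ici n)) :
    Tendsto b atTop (𝓝 l) := by
  refine (LocallyConvexSpace.convex_basis (𝕜 := ℝ) l).tendsto_right_iff.2 fun s ⟨hs, hconv⟩ => ?_
  obtain ⟨N, hN⟩ := eventually_atTop.1 (ha.eventually hs)
  filter_upwards [eventually_ge_atTop N] with n hn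
  exact convexHull_min (image_subset_iff.2 fun m hm => hN m (hn.trans hm)) hconv (hb n)

section QuadraticForm

variable {V : Type*} [AddCommGroup V] [Module ℝ V] {Q : QuadraticForm ℝ V}

theorem quadraticForm_add_add_sub (Q : QuadraticForm ℝ V) (v w : V) :
    Q (v + w) + Q (v - w) = 2 * Q v + 2 * Q w := by
  rw [sub_eq_add_neg, QuadraticMap.map_add Q, QuadraticMap.map_add Q, QuadraticMap.polar_neg_right,
    QuadraticMap.map_neg]
  ring

theorem convex_setOf_quadraticForm_le (hQ : ∀ v, 0 ≤ Q v) (C : ℝ) : Convex ℝ {v | Q v ≤ C} := by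
  intro v hv w hw s t hs ht hst
  have hpolar : QuadraticMap.polar Q v w ≤ Q v + Q w := by
    have := hQ (v - w)
    rw [sub_eq_add_neg, QuadraticMap.map_add Q, QuadraticMap.polar_neg_right,
      QuadraticMap.map_neg] at this
    linarith
  calc Q (s • v + t • w) = s * s * Q v + t * t * Q w + s * t * QuadraticMap.polar Q v w := by
        rw [QuadraticMap.map_add Q, QuadraticMap.map_smul, QuadraticMap.map_smul,
          QuadraticMap.polar_smul_left, QuadraticMap.polar_smul_right]
        simp only [smul_eq_mul]
        ring
    _ ≤ s * s * Q v + t * t * Q w + s * t * (Q v + Q w) := by gcongr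
    _ = (s + t) * (s * Q v + t * Q w) := by ring
    _ ≤ (s + t) * (s * C + t * C) := by gcongr <;> assumption
    _ = C := by rw [← add_mul, hst, one_mul, one_mul]

theorem quadraticForm_sub_le_of_convex {s : Set V} (hs : Convex ℝ s) {e : ℝ}
    (he : ∀ v ∈ s, e ≤ Q v) {v w : V} (hv : v ∈ s) (hw : w ∈ s) :
    Q (v - w) ≤ 2 * Q v + 2 * Q w - 4 * e := by
  have hmid : (2⁻¹ : ℝ) • (v + w) ∈ s := by
    rw [smul_add]
    exact hs hv hw (by norm_num) (by norm_num) (by norm_num)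
  have hle := he _ hmid
  rw [QuadraticMap.map_smul, smul_eq_mul] at hle
  linarith [quadraticForm_add_add_sub Q v w]

theorem exists_mem_tendsto_cauchy_of_antitone_convex (hQ : ∀ v, 0 ≤ Q v) {s : ℕ → Set V}
    (hs : Antitone s) (hconv : ∀ n, Convex ℝ (s n)) {C : ℝ} (hC : ∀ n, ∃ v ∈ s n, Q v ≤ C) :
    ∃ (w : ℕ → V) (d : ℝ), (∀ n, w n ∈ s n) ∧ Tendsto (fun n => Q (w n)) atTop (𝓝 d) ∧
      Tendsto (fun p : ℕ × ℕ => Q (w p.1 - w p.2)) atTop (𝓝 0) := by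
  have hbdd (n : ℕ) : BddBelow (Q '' s n) := ⟨0, by rintro _ ⟨v, -, rfl⟩; exact hQ v⟩
  have hne (n : ℕ) : (Q '' s n).Nonempty :=
    let ⟨v, hv, _⟩ := hC n; ⟨Q v, v, hv, rfl⟩
  let e (n : ℕ) : ℝ := sInf (Q '' s n)
  have e_le {n : ℕ} {v : V} (hv : v ∈ s n) : e n ≤ Q v := csInf_le (hbdd n) ⟨v, hv, rfl⟩
  have e_mono : Monotone e := fun m n hmn =>
    csInf_le_csInf (hbdd m) (hne n) (image_mono (hs hmn))
  have he : Tendsto e atTop (𝓝 (⨆ n, e n)) :=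
    tendsto_atTop_ciSup e_mono ⟨C, forall_mem_range.2 fun n =>
      let ⟨_, hv, hvC⟩ := hC n; (e_le hv).trans hvC⟩
  have hchoose (n : ℕ) : ∃ v ∈ s n, Q v < e n + 1 / ((n : ℝ) + 1) := by
    obtain ⟨_, ⟨v, hv, rfl⟩, hlt⟩ := exists_lt_of_csInf_lt (hne n)
      (lt_add_of_pos_right (e n) Nat.one_div_pos_of_nat)
    exact ⟨v, hv, hlt⟩
  choose w hw hw_lt using hchoose
  have hQw : Tendsto (fun n => Q (w n)) atTop (𝓝 (⨆ n, e n)) := by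
    refine tendsto_of_tendsto_of_tendsto_of_le_of_le he ?_ (fun n => e_le (hw n))
      fun n => (hw_lt n).le
    simpa only [add_zero] using he.add tendsto_one_div_add_atTop_nhds_zero_nat
  refine ⟨w, _, hw, hQw, squeeze_zero (fun p => hQ _) (fun p => ?_)
    (g := fun p => 2 * Q (w p.1) + 2 * Q (w p.2) - 4 * min (e p.1) (e p.2)) ?_⟩
  · rw [← e_mono.map_min]
    exact quadraticForm_sub_le_of_convex (hconv _) (fun v => e_le)
      (hs (min_le_left _ _) (hw p.1)) (hs (min_le_right _ _) (hw p.2))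
  · have hlim := (((hQw.comp tendsto_fst).const_mul 2).add
      ((hQw.comp tendsto_snd).const_mul 2)).sub
        (((he.comp tendsto_fst).min (he.comp tendsto_snd)).const_mul 4)
    rw [min_self, ← add_mul, ← sub_mul, show (2 + 2 - 4 : ℝ) = 0 by norm_num, zero_mul,
      prod_atTop_atTop_eq] at hlim
    exact hlim

end QuadraticForm

/-! ### The Hardy functional as a quadratic form -/

/-- The unit disc `B` as a bundled open set, so that Mathlib's `𝓓(disc, ℝ)` is `C_c^∞(B)`. -/
def disc : TopologicalSpace.Opens E2 := ⟨B2, Metric.isOpen_ball⟩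

theorem isOpen_B2 : IsOpen B2 := Metric.isOpen_ball

theorem mem_B2_iff {x : E2} : x ∈ B2 ↔ ‖x‖ < 1 := mem_ball_zero_iff

theorem one_sub_norm_sq_pos {x : E2} (hx : x ∈ B2) : 0 < 1 - ‖x‖ ^ 2 := by
  have := mem_B2_iff.1 hx
  nlinarith [norm_nonneg x]

theorem isTest_coe (u : 𝓓(disc, ℝ)) : IsTest u :=
  ⟨u.contDiff, u.hasCompactSupport, u.tsupport_subset⟩

namespace IsTest

variable {u : E2 → ℝ}

/-- A function satisfying `IsTest` as an element of the vector space `C_c^∞(B)`. -/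
def toTestFunction (hu : IsTest u) : 𝓓(disc, ℝ) := ⟨u, hu.1, hu.2.1, hu.2.2⟩

theorem of_support_subset (hu : IsTest u) {w : E2 → ℝ} (hw : ContDiffOn ℝ (⊤ : ℕ∞) w B2)
    (hsupp : Function.support w ⊆ Function.support u) : IsTest w :=
  have htsupp : tsupport w ⊆ tsupport u := closure_mono hsupp
  ⟨contDiff_of_contDiffAt_tsupport fun _ hx =>
      hw.contDiffAt (isOpen_B2.mem_nhds (hu.2.2 (htsupp hx))),
    hu.2.1.mono hsupp, htsupp.trans hu.2.2⟩

theorem div (hu : IsTest u) {g : E2 → ℝ} (hg : ContDiffOn ℝ (⊤ : ℕ∞) g B2)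
    (hg0 : ∀ x ∈ B2, g x ≠ 0) : IsTest (fun x => u x / g x) :=
  hu.of_support_subset (hu.1.contDiffOn.div hg hg0) fun _ hx h => hx (by simp [h])

protected theorem sq (hu : IsTest u) : IsTest (fun x => u x ^ 2) :=
  hu.of_support_subset (hu.1.pow 2).contDiffOn fun _ hx h => hx (by simp [h])

theorem eq_zero_of_notMem (hu : IsTest u) {x : E2} (hx : x ∉ B2) : u x = 0 :=
  image_eq_zero_of_notMem_tsupport fun h => hx (hu.2.2 h)

theorem integrable (hu : IsTest u) : Integrable u :=
  hu.1.continuous.integrable_of_hasCompactSupport hu.2.1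

theorem integrable_sq (hu : IsTest u) : Integrable fun x => u x ^ 2 := hu.sq.integrable

theorem differentiable (hu : IsTest u) : Differentiable ℝ u := hu.1.differentiable (by simp)

theorem continuous_gradient (hu : IsTest u) : Continuous (gradient u) :=
  (LinearIsometryEquiv.continuous _).comp (hu.1.continuous_fderiv (by simp))

theorem hasCompactSupport_gradient (hu : IsTest u) : HasCompactSupport (gradient u) :=
  (hu.2.1.fderiv ℝ).comp_left (map_zero _)

theorem integrable_mul_norm_gradient_sq (hu : IsTest u) {g : E2 → ℝ} (hg : Continuous g) :
    Integrable fun x => g x * ‖gradient u x‖ ^ 2 :=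
  have hsq : HasCompactSupport fun x => ‖gradient u x‖ ^ 2 :=
    hu.hasCompactSupport_gradient.mono fun _ hx h => hx (by simp [h])
  (hg.mul (hu.continuous_gradient.norm.pow 2)).integrable_of_hasCompactSupport hsq.mul_left

theorem integrable_norm_gradient_sq (hu : IsTest u) : Integrable fun x => ‖gradient u x‖ ^ 2 := by
  simpa only [one_mul] using hu.integrable_mul_norm_gradient_sq continuous_const (g := fun _ => 1)

theorem integrable_sq_div (hu : IsTest u) :
    IntegrableOn (fun x => u x ^ 2 / (1 - ‖x‖ ^ 2) ^ 2) B2 := by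
  have hdiv : IsTest fun x => u x / (1 - ‖x‖ ^ 2) :=
    hu.div (contDiff_const.sub (contDiff_norm_sq ℝ)).contDiffOn
      fun x hx => (one_sub_norm_sq_pos hx).ne'
  simpa only [div_pow] using hdiv.integrable_sq.integrableOn

theorem H_eq_integral (hu : IsTest u) :
    H u = ∫ x in B2, (‖gradient u x‖ ^ 2 - u x ^ 2 / (1 - ‖x‖ ^ 2) ^ 2) :=
  (integral_sub hu.integrable_norm_gradient_sq.integrableOn hu.integrable_sq_div).symm

end IsTest

section HardyForm

/-- The quadratic form `v ↦ ∫ q x v ∂μ(x)` obtained by integrating a family of quadratic forms. -/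
def integralQuadraticForm {V X : Type*} [AddCommGroup V] [Module ℝ V] [MeasurableSpace X]
    (μ : Measure X) (q : X → QuadraticForm ℝ V) (hq : ∀ v, Integrable (fun x => q x v) μ) :
    QuadraticForm ℝ V :=
  have polar_eq (v w : V) : QuadraticMap.polar (fun v => ∫ x, q x v ∂μ) v w =
      ∫ x, QuadraticMap.polar (q x) v w ∂μ := by
    simp only [QuadraticMap.polar]
    rw [integral_sub (f := fun x => q x (v + w) - q x v) ((hq _).sub (hq _)) (hq _),
      integral_sub (hq _) (hq _)]
  have integrable_polar (v w : V) : Integrable (fun x => QuadraticMap.polar (q x) v w) μ :=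
    ((hq (v + w)).sub (hq v)).sub (hq w)
  .ofPolar (fun v => ∫ x, q x v ∂μ)
    (fun c v => by simp only [QuadraticMap.map_smul, integral_smul])
    (fun v v' w => by
      simp only [polar_eq, QuadraticMap.polar_add_left]
      exact integral_add (integrable_polar v w) (integrable_polar v' w))
    (fun c v w => by
      simp only [polar_eq, QuadraticMap.polar_smul_left, integral_smul])

/-- Evaluation at `x` as a linear functional on `C_c^∞(B)`. -/
def evalAt (x : E2) : 𝓓(disc, ℝ) →ₗ[ℝ] ℝ where
  toFun u := u x
  map_add' _ _ := rfl
  map_smul' _ _ := rfl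

/-- `u ↦ ∇u(x)` as a linear map on `C_c^∞(B)`. -/
def gradientAt (x : E2) : 𝓓(disc, ℝ) →ₗ[ℝ] E2 where
  toFun u := gradient u x
  map_add' u w := by
    rw [gradient, FunLike.coe_add, fderiv_add (isTest_coe u).differentiable.differentiableAt
      (isTest_coe w).differentiable.differentiableAt, map_add]
    rfl
  map_smul' c u := by
    rw [gradient, FunLike.coe_smul, fderiv_const_smul
      (isTest_coe u).differentiable.differentiableAt, map_smul]
    rfl

/-- The integrand `|∇u(x)|² - u(x)² / (1 - |x|²)²` of the Hardy functional at a fixed point `x`, as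
a quadratic form in `u`. -/
def hardyDensity (x : E2) : QuadraticForm ℝ 𝓓(disc, ℝ) :=
  (LinearMap.BilinMap.toQuadraticMap (innerₗ E2)).comp (gradientAt x) -
    ((1 - ‖x‖ ^ 2) ^ 2)⁻¹ • QuadraticMap.sq.comp (evalAt x)

theorem hardyDensity_apply (x : E2) (u : 𝓓(disc, ℝ)) :
    hardyDensity x u = ‖gradient u x‖ ^ 2 - u x ^ 2 / (1 - ‖x‖ ^ 2) ^ 2 := by
  rw [← real_inner_self_eq_norm_sq, div_eq_inv_mul, sq (u x)]
  rfl

theorem integrable_hardyDensity (u : 𝓓(disc, ℝ)) :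
    IntegrableOn (fun x => hardyDensity x u) B2 := by
  simp only [hardyDensity_apply]
  exact (isTest_coe u).integrable_norm_gradient_sq.integrableOn.sub (isTest_coe u).integrable_sq_div

/-- The Hardy functional as a quadratic form on `C_c^∞(B)`. -/
def hardyForm : QuadraticForm ℝ 𝓓(disc, ℝ) :=
  integralQuadraticForm (volume.restrict B2) hardyDensity integrable_hardyDensity

theorem hardyForm_apply (u : 𝓓(disc, ℝ)) : hardyForm u = H u := by
  rw [(isTest_coe u).H_eq_integral]
  exact integral_congr_ae (.of_forall fun x => hardyDensity_apply x u)

end HardyForm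

/-! ### Ground state substitution -/

section GroundState

/-- The quotient `u / φ` by `φ x = √(1 - |x|²)`, a positive supersolution of
`-Δφ = φ / (1 - |x|²)²`; it takes the junk value `0` outside `B`. -/
def groundQuotient (u : E2 → ℝ) (x : E2) : ℝ := u x / √(1 - ‖x‖ ^ 2)

theorem eq_sqrt_mul_groundQuotient (u : E2 → ℝ) {x : E2} (hx : x ∈ B2) :
    u x = √(1 - ‖x‖ ^ 2) * groundQuotient u x :=
  (mul_div_cancel₀ _ (Real.sqrt_pos.2 (one_sub_norm_sq_pos hx)).ne').symm

theorem sq_eq_mul_groundQuotient_sq (u : E2 → ℝ) {x : E2} (hx : x ∈ B2) :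
    u x ^ 2 = (1 - ‖x‖ ^ 2) * groundQuotient u x ^ 2 := by
  rw [eq_sqrt_mul_groundQuotient u hx, mul_pow, Real.sq_sqrt (one_sub_norm_sq_pos hx).le]

theorem sq_le_groundQuotient_sq (u : E2 → ℝ) {x : E2} (hx : x ∈ B2) :
    u x ^ 2 ≤ groundQuotient u x ^ 2 := by
  rw [sq_eq_mul_groundQuotient_sq u hx]
  exact mul_le_of_le_one_left (sq_nonneg _) (sub_le_self _ (sq_nonneg _))

namespace IsTest

variable {u : E2 → ℝ}

protected theorem groundQuotient (hu : IsTest u) : IsTest (groundQuotient u) :=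
  hu.div ((contDiff_const.sub (contDiff_norm_sq ℝ)).contDiffOn.sqrt fun _ hx =>
    (one_sub_norm_sq_pos hx).ne') fun _ hx => (Real.sqrt_pos.2 (one_sub_norm_sq_pos hx)).ne'

theorem gradient_eq_groundQuotient (hu : IsTest u) {x : E2} (hx : x ∈ B2) :
    gradient u x = √(1 - ‖x‖ ^ 2) • gradient (groundQuotient u) x -
      (groundQuotient u x / √(1 - ‖x‖ ^ 2)) • x := by
  have hpos := one_sub_norm_sq_pos hx
  have hV := hu.groundQuotient.differentiable.differentiableAt (x := x)
  have hsqrt : HasFDerivAt (fun y : E2 => √(1 - ‖y‖ ^ 2)) _ x :=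
    ((hasStrictFDerivAt_norm_sq x).hasFDerivAt.const_sub 1).sqrt hpos.ne'
  have heq : u =ᶠ[𝓝 x] fun y => √(1 - ‖y‖ ^ 2) * groundQuotient u y :=
    eventually_of_mem (isOpen_B2.mem_nhds hx) fun y => eq_sqrt_mul_groundQuotient u
  rw [heq.gradient_eq]
  refine HasGradientAt.gradient (hasGradientAt_iff_hasFDerivAt.2 ?_)
  refine (hsqrt.mul hV.hasFDerivAt).congr_fderiv ?_
  ext v
  simp
  ring

theorem hardyDensity_eq_groundQuotient (hu : IsTest u) {x : E2} (hx : x ∈ B2) :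
    ‖gradient u x‖ ^ 2 - u x ^ 2 / (1 - ‖x‖ ^ 2) ^ 2 =
      (1 - ‖x‖ ^ 2) * ‖gradient (groundQuotient u) x‖ ^ 2 + groundQuotient u x ^ 2 -
        (fderiv ℝ (fun y => groundQuotient u y ^ 2) x x + 2 * groundQuotient u x ^ 2) := by
  have hpos := one_sub_norm_sq_pos hx
  have hV := hu.groundQuotient.differentiable.differentiableAt (x := x)
  rw [(hV.hasFDerivAt.pow 2).fderiv, hu.gradient_eq_groundQuotient hx,
    sq_eq_mul_groundQuotient_sq u hx]
  simp only [norm_sub_sq_real, norm_smul, Real.norm_eq_abs, mul_pow, sq_abs, div_pow,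
    Real.sq_sqrt hpos.le, inner_smul_left, inner_smul_right, inner_gradient_left,
    _root_.smul_apply, smul_eq_mul, conj_trivial]
  have := (Real.sqrt_pos.2 hpos).ne'
  have := hpos.ne'
  field_simp
  ring

theorem integrable_weighted_norm_gradient_sq (hu : IsTest u) :
    Integrable fun x => (1 - ‖x‖ ^ 2) * ‖gradient u x‖ ^ 2 :=
  hu.integrable_mul_norm_gradient_sq (by fun_prop)

theorem integrable_fderiv_apply_self (hu : IsTest u) : Integrable fun x => fderiv ℝ u x x :=
  ((hu.1.continuous_fderiv (by simp)).clm_apply continuous_id).integrable_of_hasCompactSupport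
    ((hu.2.1.fderiv ℝ).mono fun x hx h => hx (by simp [h]))

theorem integral_divergence_smul_self (hu : IsTest u) :
    ∫ x in B2, (fderiv ℝ u x x + 2 * u x) = 0 := by
  have hfderiv {x : E2} (hx : x ∉ B2) : fderiv ℝ u x = 0 :=
    fderiv_of_notMem_tsupport ℝ fun h => hx (hu.2.2 h)
  rw [setIntegral_eq_integral_of_forall_compl_eq_zero fun x hx => by
      simp [hfderiv hx, hu.eq_zero_of_notMem hx],
    integral_add hu.integrable_fderiv_apply_self (hu.integrable.const_mul 2),
    integral_fderiv_apply_self (hu.1.of_le (by simp)) hu.2.1, integral_const_mul]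
  simp

theorem H_eq_integral_groundQuotient (hu : IsTest u) :
    H u = ∫ x in B2, ((1 - ‖x‖ ^ 2) * ‖gradient (groundQuotient u) x‖ ^ 2 +
      groundQuotient u x ^ 2) := by
  have hV := hu.groundQuotient
  have hdiv := hV.sq
  rw [hu.H_eq_integral, setIntegral_congr_fun isOpen_B2.measurableSet fun x =>
    hu.hardyDensity_eq_groundQuotient, integral_sub, hdiv.integral_divergence_smul_self, sub_zero]
  · exact hV.integrable_weighted_norm_gradient_sq.integrableOn.add hV.integrable_sq.integrableOn
  · exact (hdiv.integrable_fderiv_apply_self.add (hV.integrable_sq.const_mul 2)).integrableOn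

theorem H_nonneg (hu : IsTest u) : 0 ≤ H u := by
  rw [hu.H_eq_integral_groundQuotient]
  refine setIntegral_nonneg isOpen_B2.measurableSet fun x hx => ?_
  have := one_sub_norm_sq_pos hx
  positivity

theorem integral_sq_le_H (hu : IsTest u) : ∫ x in B2, u x ^ 2 ≤ H u := by
  have hV := hu.groundQuotient
  rw [hu.H_eq_integral_groundQuotient]
  refine setIntegral_mono_on hu.integrable_sq.integrableOn
    (hV.integrable_weighted_norm_gradient_sq.integrableOn.add hV.integrable_sq.integrableOn)
    isOpen_B2.measurableSet fun x hx => ?_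
  have := one_sub_norm_sq_pos hx
  exact (sq_le_groundQuotient_sq u hx).trans (le_add_of_nonneg_left (by positivity))

theorem integral_weighted_norm_gradient_sq_le_H (hu : IsTest u) :
    ∫ x in B2, (1 - ‖x‖ ^ 2) * ‖gradient (groundQuotient u) x‖ ^ 2 ≤ H u := by
  have hV := hu.groundQuotient
  rw [hu.H_eq_integral_groundQuotient]
  exact setIntegral_mono_on hV.integrable_weighted_norm_gradient_sq.integrableOn
    (hV.integrable_weighted_norm_gradient_sq.integrableOn.add hV.integrable_sq.integrableOn)
    isOpen_B2.measurableSet fun x _ => le_add_of_nonneg_right (sq_nonneg _)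

end IsTest

end GroundState

/-! ### Radial estimates -/

theorem setIntegral_ball_fun_norm {E F : Type*} [NormedAddCommGroup E] [NormedSpace ℝ E]
    [Nontrivial E] [FiniteDimensional ℝ E] [MeasurableSpace E] [BorelSpace E]
    [NormedAddCommGroup F] [NormedSpace ℝ F] (μ : Measure E) [μ.IsAddHaarMeasure]
    (f : ℝ → F) (R : ℝ) :
    ∫ x in Metric.ball (0 : E) R, f ‖x‖ ∂μ = Module.finrank ℝ E • μ.real (Metric.ball 0 1) •
      ∫ r in Ioo 0 R, r ^ (Module.finrank ℝ E - 1) • f r := by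
  calc ∫ x in Metric.ball (0 : E) R, f ‖x‖ ∂μ = ∫ x, (Iio R).indicator f ‖x‖ ∂μ := by
        rw [← integral_indicator Metric.isOpen_ball.measurableSet]
        refine integral_congr_ae (.of_forall fun x => ?_)
        simp only [indicator, mem_ball_zero_iff, mem_Iio]
    _ = _ := by
        rw [integral_fun_norm_addHaar]
        simp_rw [← indicator_smul_apply (Iio R) (fun r : ℝ => r ^ (Module.finrank ℝ E - 1)) f]
        rw [setIntegral_indicator measurableSet_Iio, Ioi_inter_Iio]

theorem setIntegral_B2_fun_norm (f : ℝ → ℝ) :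
    ∫ x in B2, f ‖x‖ = 2 * π * ∫ r in Ioo 0 1, r * f r := by
  rw [B2, setIntegral_ball_fun_norm, measureReal_def, EuclideanSpace.volume_ball_fin_two]
  simp [Real.pi_nonneg, mul_assoc]

theorem norm_pt (r : ℝ) : ‖pt r‖ = |r| := by
  rw [pt, PiLp.norm_single, Real.norm_eq_abs]

theorem contDiff_pt : ContDiff ℝ (⊤ : ℕ∞) pt :=
  PiLp.contDiff_toLp.comp (contDiff_single (fun _ : Fin 2 => ℝ) _ 0)

section RadialEstimate

/-- The variable `h r = log (r / √(1 - r²))`, with `h' = 1 / (r (1 - r²))` the reciprocal of the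
weight of `(g')²` in the radial Dirichlet energy `∫ (1 - ‖x‖²) ‖∇(g ∘ ‖·‖)‖²`. -/
def hardyLog (r : ℝ) : ℝ := log r - log (1 - r ^ 2) / 2

theorem hasDerivAt_hardyLog {r : ℝ} (h0 : 0 < r) (h1 : r < 1) :
    HasDerivAt hardyLog (r * (1 - r ^ 2))⁻¹ r := by
  have hpos : 0 < 1 - r ^ 2 := by nlinarith
  have hinner : HasDerivAt (fun s : ℝ => 1 - s ^ 2) (-(2 * r)) r := by
    simpa using (hasDerivAt_pow 2 r).const_sub 1
  refine ((hasDerivAt_log h0.ne').sub ((hinner.log hpos.ne').div_const 2)).congr_deriv ?_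
  field

theorem log_le_hardyLog {r : ℝ} (h0 : 0 < r) (h1 : r < 1) : log r ≤ hardyLog r := by
  have : log (1 - r ^ 2) ≤ 0 := log_nonpos (by nlinarith) (by nlinarith)
  rw [hardyLog]
  linarith

theorem hardyLog_le_hardyLog {a b : ℝ} (ha : 0 < a) (hab : a ≤ b) (hb : b < 1) :
    hardyLog a ≤ hardyLog b := by
  have hpos : 0 < 1 - b ^ 2 := by nlinarith
  unfold hardyLog
  gcongr

variable {u : E2 → ℝ}

theorem groundQuotient_eq_comp_norm (hrad : ∀ x, u x = u (pt ‖x‖)) (x : E2) :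
    groundQuotient u x = groundQuotient u (pt ‖x‖) := by
  rw [groundQuotient, groundQuotient, ← hrad, norm_pt, abs_norm]

theorem IsTest.integral_radial_energy_le (hu : IsTest u) (hrad : ∀ x, u x = u (pt ‖x‖)) :
    2 * π * ∫ r in Ioo 0 1, r * ((1 - r ^ 2) * deriv (fun s => groundQuotient u (pt s)) r ^ 2) ≤
      H u := by
  have hV := hu.groundQuotient
  have hprofile : Differentiable ℝ fun s => groundQuotient u (pt s) :=
    hV.differentiable.comp (contDiff_pt.differentiable (by simp))
  refine le_trans (Eq.le ?_) hu.integral_weighted_norm_gradient_sq_le_H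
  rw [← setIntegral_B2_fun_norm]
  refine setIntegral_congr_ae isOpen_B2.measurableSet ?_
  filter_upwards [volume.ae_ne 0] with x hx _
  have hgrad := norm_gradient_comp_norm hx hprofile.differentiableAt
  simp only [← groundQuotient_eq_comp_norm hrad] at hgrad
  rw [hgrad, sq_abs]

theorem IsTest.sq_groundQuotient_sub_le (hu : IsTest u) (hrad : ∀ x, u x = u (pt ‖x‖))
    {a b : ℝ} (ha : 0 < a) (hab : a ≤ b) (hb : b < 1) :
    (groundQuotient u (pt b) - groundQuotient u (pt a)) ^ 2 ≤
      (hardyLog b - hardyLog a) * (H u / (2 * π)) := by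
  let g (r : ℝ) : ℝ := groundQuotient u (pt r)
  have hg : ContDiff ℝ (⊤ : ℕ∞) g := hu.groundQuotient.1.comp contDiff_pt
  have hg' : Continuous (deriv g) := hg.continuous_deriv (by simp)
  have hweight {r : ℝ} (hr : r ∈ Icc a b) : 0 < r * (1 - r ^ 2) := by
    have := ha.trans_le hr.1
    have := hr.2.trans_lt hb
    exact mul_pos ‹_› (by nlinarith)
  have hcs := sq_sub_le_mul_integral_sq_deriv_div hab
    (fun r _ => (hg.differentiable (by simp) r).hasDerivAt) hg'.continuousOn
    (fun r hr => hasDerivAt_hardyLog (ha.trans_le hr.1) (hr.2.trans_lt hb))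
    (ContinuousOn.inv₀ (by fun_prop) fun r hr => (hweight hr).ne')
    fun r hr => inv_pos.2 (hweight hr)
  refine hcs.trans (mul_le_mul_of_nonneg_left ?_ (sub_nonneg.2 (hardyLog_le_hardyLog ha hab hb)))
  rw [le_div_iff₀' (by positivity)]
  refine le_trans ?_ (hu.integral_radial_energy_le hrad)
  gcongr
  calc ∫ r in a..b, deriv g r ^ 2 / (r * (1 - r ^ 2))⁻¹
      = ∫ r in Ioc a b, r * ((1 - r ^ 2) * deriv g r ^ 2) := by
        rw [intervalIntegral.integral_of_le hab]
        refine integral_congr_ae (.of_forall fun r => ?_)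
        simp only [div_inv_eq_mul]
        ring
    _ ≤ ∫ r in Ioo 0 1, r * ((1 - r ^ 2) * deriv g r ^ 2) := by
        have hcont : Continuous fun r : ℝ => r * ((1 - r ^ 2) * deriv g r ^ 2) := by fun_prop
        refine setIntegral_mono_set (hcont.integrableOn_Icc.mono_set Ioo_subset_Icc_self)
          ((ae_restrict_mem measurableSet_Ioo).mono fun r hr => ?_)
          (LE.le.eventuallyLE fun r hr => ⟨ha.trans hr.1, hr.2.trans_lt hb⟩)
        have := hr.1
        have : 0 < 1 - r ^ 2 := by nlinarith [hr.2]
        simp only [Pi.zero_apply]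
        positivity

end RadialEstimate

/-- The functions over which the supremum is taken: `v ∈ Σ` with `H v ≤ 1`, as a subset of the
vector space `C_c^∞(B)`. -/
def admissible : Set 𝓓(disc, ℝ) := {v | IsSigma v ∧ H v ≤ 1}

namespace IsSigma

variable {u : E2 → ℝ}

theorem eq_apply_pt_norm (hu : IsSigma u) (x : E2) : u x = u (pt ‖x‖) :=
  le_antisymm (hu.2 _ _ (by rw [norm_pt, abs_norm])) (hu.2 _ _ (by rw [norm_pt, abs_norm]))

theorem nonneg (hu : IsSigma u) (x : E2) : 0 ≤ u x := by
  have hy : pt (max 1 ‖x‖) ∉ B2 := by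
    rw [mem_B2_iff, norm_pt, not_lt]
    exact (le_max_left _ _).trans (le_abs_self _)
  rw [← hu.1.eq_zero_of_notMem hy]
  exact hu.2 _ _ (by rw [norm_pt]; exact (le_max_right _ _).trans (le_abs_self _))

theorem pi_mul_sq_le_H (hu : IsSigma u) {x : E2} (hx : x ∈ B2) :
    π * ‖x‖ ^ 2 * u x ^ 2 ≤ H u := by
  have hsub : Metric.ball (0 : E2) ‖x‖ ⊆ B2 := Metric.ball_subset_ball (mem_B2_iff.1 hx).le
  calc π * ‖x‖ ^ 2 * u x ^ 2 = ∫ _y in Metric.ball (0 : E2) ‖x‖, u x ^ 2 := by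
        rw [setIntegral_const, measureReal_def, EuclideanSpace.volume_ball_fin_two]
        simp [Real.pi_nonneg, mul_comm]
    _ ≤ ∫ y in Metric.ball (0 : E2) ‖x‖, u y ^ 2 := by
        refine setIntegral_mono_on (integrableOn_const measure_ball_lt_top.ne)
          hu.1.integrable_sq.integrableOn Metric.isOpen_ball.measurableSet fun y hy => ?_
        have := hu.nonneg x
        have := hu.2 y x (mem_ball_zero_iff.1 hy).le
        gcongr
    _ ≤ ∫ y in B2, u y ^ 2 := setIntegral_mono_set hu.1.integrable_sq.integrableOn
        (.of_forall fun y => sq_nonneg _) hsub.eventuallyLE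
    _ ≤ H u := hu.1.integral_sq_le_H

theorem sq_apply_le_of_half_le (hu : IsSigma u) (hH : H u ≤ 1) {x : E2}
    (hx0 : 1 / 2 ≤ ‖x‖) (hx1 : ‖x‖ < 1) : u x ^ 2 ≤ 4 / 3 := by
  have henergy := (hu.pi_mul_sq_le_H (mem_B2_iff.2 hx1)).trans hH
  have : 3 / 4 ≤ π * ‖x‖ ^ 2 := by nlinarith [Real.pi_gt_three]
  nlinarith [sq_nonneg (u x)]

theorem apply_le (hu : IsSigma u) (hH : H u ≤ 1) {x : E2} (hx0 : 0 < ‖x‖)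
    (hx1 : ‖x‖ < 1) : u x ≤ 2 + √(-log ‖x‖ / (2 * π)) := by
  rcases le_total (1 / 2) ‖x‖ with hx | hx
  · have := hu.sq_apply_le_of_half_le hH hx hx1
    exact (abs_le_of_sq_le_sq' (by linarith) two_pos.le).2.trans
      (le_add_of_nonneg_right (Real.sqrt_nonneg _))
  have hhalf : ‖pt (1 / 2)‖ = 1 / 2 := by rw [norm_pt]; norm_num
  have hV_half : groundQuotient u (pt (1 / 2)) ≤ 2 := by
    have hsq := hu.sq_apply_le_of_half_le hH hhalf.ge (hhalf.trans_lt (by norm_num))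
    rw [sq_eq_mul_groundQuotient_sq u (mem_B2_iff.2 (hhalf.trans_lt (by norm_num))), hhalf] at hsq
    exact (abs_le_of_sq_le_sq' (by linarith) two_pos.le).2
  have hlog_half : hardyLog (1 / 2) ≤ 0 := by
    have : 2 * log (1 / 2) ≤ log (1 - (1 / 2) ^ 2) := by
      rw [← Nat.cast_ofNat, ← log_pow]
      exact log_le_log (by norm_num) (by norm_num)
    rw [hardyLog]
    linarith
  have hdiff : groundQuotient u (pt ‖x‖) - groundQuotient u (pt (1 / 2)) ≤
      √(-log ‖x‖ / (2 * π)) := by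
    refine Real.le_sqrt_of_sq_le ?_
    rw [sub_sq_comm]
    calc (groundQuotient u (pt (1 / 2)) - groundQuotient u (pt ‖x‖)) ^ 2
        ≤ (hardyLog (1 / 2) - hardyLog ‖x‖) * (H u / (2 * π)) :=
          hu.1.sq_groundQuotient_sub_le hu.eq_apply_pt_norm hx0 hx (by norm_num)
      _ ≤ -log ‖x‖ * (1 / (2 * π)) := by
          have := log_le_hardyLog hx0 hx1
          have := log_nonpos hx0.le hx1.le
          have := hu.1.H_nonneg
          have : H u / (2 * π) ≤ 1 / (2 * π) := by gcongr
          refine mul_le_mul ?_ this (by positivity) ?_ <;> linarith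
      _ = -log ‖x‖ / (2 * π) := mul_one_div _ _
  calc u x ≤ groundQuotient u x :=
        (abs_le_of_sq_le_sq' (sq_le_groundQuotient_sq u (mem_B2_iff.2 hx1))
          (div_nonneg (hu.nonneg x) (Real.sqrt_nonneg _))).2
    _ = groundQuotient u (pt ‖x‖) := groundQuotient_eq_comp_norm hu.eq_apply_pt_norm x
    _ ≤ 2 + √(-log ‖x‖ / (2 * π)) := by linarith

end IsSigma

theorem hardyForm_nonneg (v : 𝓓(disc, ℝ)) : 0 ≤ hardyForm v := by
  rw [hardyForm_apply]
  exact (isTest_coe v).H_nonneg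

theorem convex_admissible : Convex ℝ admissible := by
  intro v hv w hw s t hs ht hst
  have hH := convex_setOf_quadraticForm_le hardyForm_nonneg 1 ((hardyForm_apply v).trans_le hv.2)
    ((hardyForm_apply w).trans_le hw.2) hs ht hst
  exact ⟨⟨isTest_coe _, fun x y hxy => add_le_add
      (mul_le_mul_of_nonneg_left (hv.1.2 x y hxy) hs)
      (mul_le_mul_of_nonneg_left (hw.1.2 x y hxy) ht)⟩, (hardyForm_apply _).symm.trans_le hH⟩

/-! ### The Trudinger–Moser functional -/

section MoserFunctional

/-- The Trudinger–Moser functional `∫_B e^{α w²}`, with junk value `0` when the integral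
diverges. -/
def moserFunctional (α : ℝ) (w : E2 → ℝ) : ℝ := ∫ x in B2, exp (α * w x ^ 2)

variable {α : ℝ}

theorem IsSigma.exp_mul_sq_le {u : E2 → ℝ} (hu : IsSigma u) (hH : H u ≤ 1) (hα : 0 ≤ α)
    {β : ℝ} (hαβ : α < β) {x : E2} (hx0 : 0 < ‖x‖) (hx1 : ‖x‖ < 1) :
    exp (α * u x ^ 2) ≤ exp (α * β * 2 ^ 2 / (β - α)) * ‖x‖ ^ (-(β / (2 * π))) := by
  have hlog : 0 ≤ -log ‖x‖ / (2 * π) :=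
    div_nonneg (neg_nonneg.2 (log_nonpos hx0.le hx1.le)) (by positivity)
  have hux := hu.nonneg x
  rw [rpow_def_of_pos hx0, ← exp_add]
  gcongr
  calc α * u x ^ 2 ≤ α * (2 + √(-log ‖x‖ / (2 * π))) ^ 2 := by
        gcongr
        exact hu.apply_le hH hx0 hx1
    _ ≤ β * √(-log ‖x‖ / (2 * π)) ^ 2 + α * β * 2 ^ 2 / (β - α) := mul_add_sq_le_of_lt hαβ _ _
    _ = α * β * 2 ^ 2 / (β - α) + log ‖x‖ * -(β / (2 * π)) := by
        rw [Real.sq_sqrt hlog]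
        ring

theorem ae_B2_norm_pos_lt_one : ∀ᵐ x ∂volume.restrict B2, 0 < ‖x‖ ∧ ‖x‖ < 1 := by
  filter_upwards [ae_restrict_of_ae (volume.ae_ne (0 : E2)),
    ae_restrict_mem isOpen_B2.measurableSet] with x hx0 hx1
  exact ⟨norm_pos_iff.2 hx0, mem_B2_iff.1 hx1⟩

theorem exists_integrableOn_bound (hα0 : 0 ≤ α) (hα : α < 4 * π) :
    ∃ g : E2 → ℝ, IntegrableOn g B2 ∧
      ∀ v ∈ admissible, ∀ᵐ x ∂volume.restrict B2, exp (α * v x ^ 2) ≤ g x := by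
  obtain ⟨β, hαβ, hβ⟩ := exists_between hα
  refine ⟨fun x => exp (α * β * 2 ^ 2 / (β - α)) * ‖x‖ ^ (-(β / (2 * π))), ?_, fun v hv => ?_⟩
  · refine integrableOn_ball_of_norm_le_rpow (α := β / (2 * π)) (by simp) ?_
      (.of_forall fun x => (Real.norm_of_nonneg (by positivity)).le)
      (Measurable.aestronglyMeasurable (by fun_prop))
    rw [finrank_euclideanSpace_fin, div_lt_iff₀ (by positivity)]
    push_cast
    linarith
  · filter_upwards [ae_B2_norm_pos_lt_one] with x hx
    exact hv.1.exp_mul_sq_le hv.2 hα0 hαβ hx.1 hx.2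

theorem aestronglyMeasurable_exp_mul_sq (v : 𝓓(disc, ℝ)) :
    AEStronglyMeasurable (fun x => exp (α * v x ^ 2)) (volume.restrict B2) :=
  Continuous.aestronglyMeasurable <| by
    have := v.contDiff.continuous
    fun_prop

theorem bddAbove_moserFunctional_admissible (hα0 : 0 ≤ α) (hα : α < 4 * π) :
    BddAbove ((fun v : 𝓓(disc, ℝ) => moserFunctional α v) '' admissible) := by
  obtain ⟨g, hg, hle⟩ := exists_integrableOn_bound hα0 hα
  refine ⟨∫ x in B2, g x, forall_mem_image.2 fun v hv => ?_⟩
  exact integral_mono_of_nonneg (.of_forall fun x => (exp_pos _).le) hg (hle v hv)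

variable {v : ℕ → 𝓓(disc, ℝ)} {w : E2 → ℝ}

theorem tendsto_moserFunctional (hα0 : 0 ≤ α) (hα : α < 4 * π)
    (hv : ∀ᶠ n in atTop, v n ∈ admissible)
    (hw : ∀ᵐ x ∂volume.restrict B2, Tendsto (fun n => v n x) atTop (𝓝 (w x))) :
    Tendsto (fun n => moserFunctional α (v n)) atTop (𝓝 (moserFunctional α w)) := by
  obtain ⟨g, hg, hle⟩ := exists_integrableOn_bound hα0 hα
  refine tendsto_integral_filter_of_dominated_convergence g
    (.of_forall fun n => aestronglyMeasurable_exp_mul_sq (v n))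
    (hv.mono fun n hn => (hle _ hn).mono fun x hx => (norm_of_nonneg (exp_pos _).le).trans_le hx)
    hg (hw.mono fun x hx => ?_)
  exact (continuous_exp.tendsto _).comp ((hx.pow 2).const_mul α)

theorem integrableOn_exp_mul_sq (hα0 : 0 ≤ α) (hα : α < 4 * π)
    (hv : ∀ᶠ n in atTop, v n ∈ admissible)
    (hw : ∀ᵐ x ∂volume.restrict B2, Tendsto (fun n => v n x) atTop (𝓝 (w x))) :
    IntegrableOn (fun x => exp (α * w x ^ 2)) B2 := by
  obtain ⟨g, hg, hle⟩ := exists_integrableOn_bound hα0 hα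
  have hlim : ∀ᵐ x ∂volume.restrict B2,
      Tendsto (fun n => exp (α * v n x ^ 2)) atTop (𝓝 (exp (α * w x ^ 2))) :=
    hw.mono fun x hx => (continuous_exp.tendsto _).comp ((hx.pow 2).const_mul α)
  refine hg.mono' (aestronglyMeasurable_of_tendsto_ae _
    (fun n => aestronglyMeasurable_exp_mul_sq (v n)) hlim) ?_
  obtain ⟨N, hN⟩ := eventually_atTop.1 hv
  have hbound : ∀ᵐ x ∂volume.restrict B2, ∀ n ≥ N, exp (α * v n x ^ 2) ≤ g x :=
    ae_all_iff.2 fun n => ae_all_iff.2 fun hn => hle _ (hN n hn)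
  filter_upwards [hlim, hbound] with x hx hxg
  rw [norm_of_nonneg (exp_pos _).le]
  exact le_of_tendsto hx (eventually_atTop.2 ⟨N, hxg⟩)

end MoserFunctional

section Compactness

theorem IsSigma.abs_groundQuotient_sub_le {u : E2 → ℝ} (hu : IsSigma u) (hH : H u ≤ 1) {a b : ℝ}
    (ha : a ∈ Ioo 0 1) (hb : b ∈ Ioo 0 1) :
    |groundQuotient u (pt a) - groundQuotient u (pt b)| ≤
      √(|hardyLog a - hardyLog b| / (2 * π)) := by
  wlog hab : b ≤ a generalizing a b
  · rw [abs_sub_comm, abs_sub_comm (hardyLog a)]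
    exact this hb ha (le_of_not_ge hab)
  refine Real.abs_le_sqrt <|
    (hu.1.sq_groundQuotient_sub_le hu.eq_apply_pt_norm hb.1 hab ha.2).trans ?_
  rw [← mul_div_assoc]
  have := hu.1.H_nonneg
  gcongr
  exact (mul_le_of_le_one_right (sub_nonneg.2 (hardyLog_le_hardyLog hb.1 hab ha.2)) hH).trans
    (le_abs_self _)

variable {v : ℕ → 𝓓(disc, ℝ)}

theorem equicontinuous_groundQuotient (hv : ∀ n, v n ∈ admissible) :
    Equicontinuous fun n (r : Ioo (0 : ℝ) 1) => groundQuotient (v n) (pt r) := by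
  intro a
  refine Metric.equicontinuousAt_of_continuity_modulus
    (fun r : Ioo (0 : ℝ) 1 => √(|hardyLog a - hardyLog r| / (2 * π))) ?_ _
    (.of_forall fun r n => (hv n).1.abs_groundQuotient_sub_le (hv n).2 a.2 r.2)
  have hlog : Tendsto (fun r : Ioo (0 : ℝ) 1 => hardyLog r) (𝓝 a) (𝓝 (hardyLog a)) :=
    (hasDerivAt_hardyLog a.2.1 a.2.2).continuousAt.tendsto.comp continuousAt_subtype_val
  simpa using ((hlog.const_sub (hardyLog a)).abs.div_const (2 * π)).sqrt

theorem isBounded_range_groundQuotient (hv : ∀ n, v n ∈ admissible) {r : ℝ} (hr : r ∈ Ioo 0 1) :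
    Bornology.IsBounded (range fun n => groundQuotient (v n) (pt r)) := by
  have hnorm : ‖pt r‖ = r := by rw [norm_pt, abs_of_pos hr.1]
  refine (Metric.isBounded_Icc 0 ((2 + √(-log r / (2 * π))) / √(1 - r ^ 2))).subset
    (range_subset_iff.2 fun n => ?_)
  have hle := (hv n).1.apply_le (hv n).2 (hnorm.symm ▸ hr.1) (hnorm.symm ▸ hr.2)
  rw [hnorm] at hle
  rw [groundQuotient, hnorm]
  exact ⟨div_nonneg ((hv n).1.nonneg _) (Real.sqrt_nonneg _), by gcongr⟩

theorem exists_subseq_tendsto_ae_of_admissible (hv : ∀ n, v n ∈ admissible) :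
    ∃ φ : ℕ → ℕ, StrictMono φ ∧ ∃ w : E2 → ℝ, Measurable w ∧
      ∀ᵐ x ∂volume.restrict B2, Tendsto (fun n => v (φ n) x) atTop (𝓝 (w x)) := by
  obtain ⟨φ, hφ, f, hf⟩ := exists_subseq_tendsto_of_equicontinuous
    (equicontinuous_groundQuotient hv) fun r => isBounded_range_groundQuotient hv r.2
  refine ⟨φ, hφ, measurable_limit_of_tendsto_metrizable_ae
    (fun n => (v (φ n)).contDiff.continuous.aemeasurable) ?_⟩
  filter_upwards [ae_B2_norm_pos_lt_one] with x hx
  refine ⟨√(1 - ‖x‖ ^ 2) * f ⟨‖x‖, hx⟩, ((hf ⟨‖x‖, hx⟩).const_mul _).congr fun n => ?_⟩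
  rw [← groundQuotient_eq_comp_norm (hv _).1.eq_apply_pt_norm,
    ← eq_sqrt_mul_groundQuotient _ (mem_B2_iff.2 hx.2)]

theorem exists_cauchy_convex_combination {w : E2 → ℝ} (hv : ∀ n, v n ∈ admissible)
    (hw : ∀ᵐ x ∂volume.restrict B2, Tendsto (fun n => v n x) atTop (𝓝 (w x))) :
    ∃ (z : ℕ → 𝓓(disc, ℝ)) (d : ℝ), (∀ n, z n ∈ admissible) ∧
      Tendsto (fun n => hardyForm (z n)) atTop (𝓝 d) ∧
      Tendsto (fun p : ℕ × ℕ => hardyForm (z p.1 - z p.2)) atTop (𝓝 0) ∧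
      ∀ᵐ x ∂volume.restrict B2, Tendsto (fun n => z n x) atTop (𝓝 (w x)) := by
  obtain ⟨z, d, hz, hd, hcauchy⟩ := exists_mem_tendsto_cauchy_of_antitone_convex hardyForm_nonneg
    (s := fun n => convexHull ℝ (v '' Ici n))
    (fun m n hmn => convexHull_mono (image_mono (Ici_subset_Ici.2 hmn)))
    (fun n => convex_convexHull ℝ _) (C := 1)
    fun n => ⟨v n, subset_convexHull ℝ _ (mem_image_of_mem v self_mem_Ici),
      (hardyForm_apply _).trans_le (hv n).2⟩
  refine ⟨z, d, fun n => convexHull_min (image_subset_iff.2 fun m _ => mem_preimage.2 (hv m))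
    convex_admissible (hz n), hd, hcauchy,
    hw.mono fun x hx => tendsto_of_mem_convexHull_image_Ici hx fun n => ?_⟩
  have := mem_image_of_mem (evalAt x) (hz n)
  rwa [LinearMap.image_convexHull, image_image] at this

end Compactness

section Maximizers

variable {α : ℝ} {w : E2 → ℝ}

theorem smul_mem_admissible {v : 𝓓(disc, ℝ)} (hv : IsSigma v) {c : ℝ} (hc : 0 ≤ c)
    (hH : c ^ 2 * hardyForm v ≤ 1) : c • v ∈ admissible := by
  refine ⟨⟨isTest_coe _, fun x y hxy => mul_le_mul_of_nonneg_left (hv.2 x y hxy) hc⟩, ?_⟩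
  rwa [← hardyForm_apply, QuadraticMap.map_smul, smul_eq_mul, ← sq]

theorem exists_admissible_apply_zero_pos : ∃ v ∈ admissible, 0 < v 0 := by
  let b (x : E2) : ℝ := smoothTransition (1 / 2 - ‖x‖ ^ 2)
  have hb : ContDiff ℝ (⊤ : ℕ∞) b :=
    smoothTransition.contDiff.comp (contDiff_const.sub (contDiff_norm_sq ℝ))
  have hsupp : tsupport b ⊆ Metric.closedBall 0 (3 / 4) := by
    refine closure_minimal (fun x hx => ?_) Metric.isClosed_closedBall
    by_contra hx'
    rw [mem_closedBall_zero_iff, not_le] at hx'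
    exact hx (smoothTransition.zero_of_nonpos (by nlinarith))
  let v : 𝓓(disc, ℝ) := ⟨b, hb, (isCompact_closedBall _ _).of_isClosed_subset
    (isClosed_tsupport b) hsupp, hsupp.trans (Metric.closedBall_subset_ball (by norm_num))⟩
  have hQ := hardyForm_nonneg v
  have hc : 0 < 1 / (1 + hardyForm v) := by positivity
  refine ⟨_, smul_mem_admissible ⟨isTest_coe v, fun x y hxy => ?_⟩ hc.le ?_, ?_⟩
  · refine smoothTransition.monotone ?_
    gcongr
  · rw [div_pow, div_mul_eq_mul_div, div_le_one (by positivity)]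
    nlinarith
  · exact mul_pos hc (smoothTransition.pos_of_pos (by simp))

theorem exists_maximizer (hα0 : 0 ≤ α) (hα : α < 4 * π) :
    ∃ (w : E2 → ℝ) (v : ℕ → 𝓓(disc, ℝ)), Measurable w ∧ (∀ n, v n ∈ admissible) ∧
      (∀ᵐ x ∂volume.restrict B2, Tendsto (fun n => v n x) atTop (𝓝 (w x))) ∧
      IsLUB ((fun v : 𝓓(disc, ℝ) => moserFunctional α v) '' admissible) (moserFunctional α w) := by
  have hne : admissible.Nonempty := exists_admissible_apply_zero_pos.imp fun _ h => h.1
  have hlub := isLUB_csSup (hne.image _) (bddAbove_moserFunctional_admissible hα0 hα)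
  obtain ⟨_, -, -, htendsto, hmem⟩ := hlub.exists_seq_monotone_tendsto (hne.image _)
  choose v hv hv_eq using hmem
  obtain ⟨φ, hφ, w, hw_meas, hw⟩ := exists_subseq_tendsto_ae_of_admissible hv
  refine ⟨w, v ∘ φ, hw_meas, fun n => hv (φ n), hw, ?_⟩
  have hlim := tendsto_moserFunctional hα0 hα (.of_forall fun n => hv (φ n)) hw
  simp only [hv_eq] at hlim
  rwa [tendsto_nhds_unique hlim (htendsto.comp hφ.tendsto_atTop)]

theorem volume_B2_lt_moserFunctional (hα : 0 < α) {v : 𝓓(disc, ℝ)}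
    (hint : IntegrableOn (fun x => exp (α * v x ^ 2)) B2) {x : E2} (hx : v x ≠ 0) :
    volume.real B2 < moserFunctional α v := by
  have hv := isTest_coe v
  have hone : IntegrableOn (fun _ => (1 : ℝ)) B2 := integrableOn_const measure_ball_lt_top.ne
  have hαsq : IntegrableOn (fun x => α * v x ^ 2) B2 :=
    hv.integrable_sq.integrableOn.const_mul α
  have hsq : 0 < ∫ x in B2, v x ^ 2 := by
    rw [setIntegral_eq_integral_of_forall_compl_eq_zero fun x hx => by
      simp [hv.eq_zero_of_notMem hx]]
    exact hv.sq.1.continuous.integral_pos_of_hasCompactSupport_nonneg_nonzero hv.sq.2.1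
      (fun _ => sq_nonneg _) (pow_ne_zero 2 hx)
  calc volume.real B2 < ∫ x in B2, (1 + α * v x ^ 2) := by
        rw [integral_add hone hαsq, integral_const_mul, setIntegral_const, smul_eq_mul, mul_one]
        exact lt_add_of_pos_right _ (mul_pos hα hsq)
    _ ≤ moserFunctional α v := by
        refine setIntegral_mono (hone.add hαsq) hint fun x => ?_
        rw [add_comm]
        exact add_one_le_exp _

theorem ae_eq_zero_of_moserFunctional_smul_le (hα : 0 < α) {c : ℝ} (hc : 1 < c)
    (hw : IntegrableOn (fun x => exp (α * w x ^ 2)) B2)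
    (hcw : IntegrableOn (fun x => exp (α * (c • w) x ^ 2)) B2)
    (hle : moserFunctional α (c • w) ≤ moserFunctional α w) : w =ᵐ[volume.restrict B2] 0 := by
  have hc2 : 1 < c ^ 2 := one_lt_pow₀ hc two_ne_zero
  have hmono : (fun x => exp (α * w x ^ 2)) ≤ fun x => exp (α * (c • w) x ^ 2) := fun x => by
    dsimp only [Pi.smul_apply, smul_eq_mul]
    rw [mul_pow]
    gcongr
    exact le_mul_of_one_le_left (sq_nonneg _) hc2.le
  have heq := (integral_eq_iff_of_ae_le hw hcw (.of_forall hmono)).1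
    ((integral_mono hw hcw hmono).antisymm hle)
  filter_upwards [heq] with x hx
  have := mul_left_cancel₀ hα.ne' (exp_injective hx)
  rw [Pi.smul_apply, smul_eq_mul, mul_pow, ← sub_eq_zero, ← one_sub_mul] at this
  exact pow_eq_zero_iff two_ne_zero |>.1 ((mul_eq_zero.1 this).resolve_left (by linarith))

theorem eq_one_of_tendsto_hardyForm (hα0 : 0 < α) (hα : α < 4 * π) {z : ℕ → 𝓓(disc, ℝ)} {d : ℝ}
    (hz : ∀ n, z n ∈ admissible) (hd : Tendsto (fun n => hardyForm (z n)) atTop (𝓝 d))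
    (hw : ∀ᵐ x ∂volume.restrict B2, Tendsto (fun n => z n x) atTop (𝓝 (w x)))
    (hmax : ∀ v ∈ admissible, moserFunctional α v ≤ moserFunctional α w) : d = 1 := by
  refine (le_of_tendsto' hd fun n => (hardyForm_apply _).trans_le (hz n).2).eq_of_not_lt
    fun hd1 => ?_
  obtain ⟨c, hcd, hc⟩ : ∃ c : ℝ, c ^ 2 * d < 1 ∧ 1 < c := by
    have hlim : Tendsto (fun c : ℝ => c ^ 2 * d) (𝓝[>] 1) (𝓝 (1 ^ 2 * d)) :=
      ((continuous_pow 2).mul_const d).continuousWithinAt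
    exact ((hlim.eventually_lt_const (by simpa using hd1)).and self_mem_nhdsWithin).exists
  have hcz : ∀ᶠ n in atTop, c • z n ∈ admissible :=
    ((hd.const_mul (c ^ 2)).eventually_le_const hcd).mono fun n =>
      smul_mem_admissible (hz n).1 (by linarith)
  have hcw : ∀ᵐ x ∂volume.restrict B2, Tendsto (fun n => (c • z n) x) atTop (𝓝 ((c • w) x)) :=
    hw.mono fun _ hx => hx.const_mul c
  have hw0 : w =ᵐ[volume.restrict B2] 0 := ae_eq_zero_of_moserFunctional_smul_le hα0 hc
    (integrableOn_exp_mul_sq hα0.le hα (.of_forall hz) hw)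
    (integrableOn_exp_mul_sq hα0.le hα hcz hcw)
    (le_of_tendsto (tendsto_moserFunctional hα0.le hα hcz hcw) (hcz.mono fun n => hmax _))
  obtain ⟨v, hv, hv0⟩ := exists_admissible_apply_zero_pos
  refine (hmax v hv).not_gt ?_
  calc moserFunctional α w = ∫ _ in B2, (1 : ℝ) :=
        integral_congr_ae (hw0.mono fun x hx => by simp [hx])
    _ = volume.real B2 := by simp
    _ < moserFunctional α v := volume_B2_lt_moserFunctional hα0
        (integrableOn_exp_mul_sq hα0.le hα (v := fun _ => v) (.of_forall fun _ => hv)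
          (.of_forall fun _ => tendsto_const_nhds)) hv0.ne'

end Maximizers

/-- For every `ε ∈ (0, 4π)` the finite supremum
`S_ε = sup{∫_B e^{(4π−ε)u²} : u ∈ Σ, H(u) ≤ 1}` is attained in the completion of `Σ`
under the Hardy norm: there are a measurable `u_ε` and a sequence `(u_k) ⊆ Σ` with
`H(u_k) ≤ 1`, `H(u_k) → 1`, `H(u_j − u_k) → 0` as `j, k → ∞`, and `u_k → u_ε` a.e. in `B`,
such that `∫_B e^{(4π−ε)u_ε²} = S_ε`. -/
theorem subcritical_sup_attained :
    ∀ ε : ℝ, 0 < ε → ε < 4 * π →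
      ∃ Sε : ℝ,
        IsLUB {t : ℝ | ∃ u : E2 → ℝ, IsSigma u ∧ H u ≤ 1 ∧
          t = ∫ x in B2, Real.exp ((4 * π - ε) * (u x) ^ 2)} Sε ∧
        ∃ (uε : E2 → ℝ) (uk : ℕ → E2 → ℝ),
          Measurable uε ∧
          (∀ k, IsSigma (uk k)) ∧
          (∀ k, H (uk k) ≤ 1) ∧
          Tendsto (fun k => H (uk k)) atTop (nhds 1) ∧
          Tendsto (fun p : ℕ × ℕ => H (uk p.1 - uk p.2)) atTop (nhds 0) ∧
          (∀ᵐ x ∂(volume.restrict B2), Tendsto (fun k => uk k x) atTop (nhds (uε x))) ∧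
          (∫ x in B2, Real.exp ((4 * π - ε) * (uε x) ^ 2)) = Sε := by
  intro ε hε hε'
  have hα0 : 0 < 4 * π - ε := sub_pos.2 hε'
  have hα : 4 * π - ε < 4 * π := sub_lt_self _ hε
  obtain ⟨w, v, hw_meas, hv, hvw, hlub⟩ := exists_maximizer hα0.le hα
  obtain ⟨z, d, hz, hd, hcauchy, hzw⟩ := exists_cauchy_convex_combination hv hvw
  have hmax : ∀ u ∈ admissible, moserFunctional (4 * π - ε) u ≤ moserFunctional (4 * π - ε) w :=
    fun u hu => hlub.1 (mem_image_of_mem _ hu)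
  obtain rfl := eq_one_of_tendsto_hardyForm hα0 hα hz hd hzw hmax
  simp only [hardyForm_apply] at hd hcauchy
  refine ⟨moserFunctional (4 * π - ε) w, ?_, w, fun k => z k, hw_meas, fun k => (hz k).1,
    fun k => (hz k).2, hd, hcauchy, hzw, rfl⟩
  convert hlub
  ext t
  constructor
  · rintro ⟨u, hu, hH, rfl⟩
    exact ⟨hu.1.toTestFunction, ⟨hu, hH⟩, rfl⟩
  · rintro ⟨u, ⟨hu, hH⟩, rfl⟩
    exact ⟨u, hu, hH, rfl⟩
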